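/- Suppose each F_m is H-smooth and λ-strongly convex with λ ≥ 0, E_{z∼D^m}‖∇f(x;z) − ∇F_m(x)‖² ≤ σ² for all x,m, and sup_x max_m ‖∇F_m(x) − ∇F(x)‖² ≤ ζ̄². Run Local SGD with K local steps per round and a fixed stepsize η ≤ 1/H. Then at every time step t (so that at most K−1 local steps have occurred since the machines' iterates were last synchronized to a common value), the machines' iterates x_t^m and their average x̄_t = (1/M)·Σ_m x_t^m satisfy (1/M)·Σ_{m=1}^M E‖x_t^m − x̄_t‖² ≤ 3Kσ²η² + 6K²η²ζ̄². -/

import Mathlib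

/-!
Let `V t` be the mean squared deviation of the machines from their average at time `t`. Then `V`
vanishes after a synchronization, and between synchronizations
`V (t + 1) ≤ (1 + 1 / K) * V t + β` with `β = (1 + K) η² ζ² + η² σ²`. At most `K - 1` such steps
follow a synchronization and `(1 + 1 / K) ^ K ≤ e < 3`, so `V t ≤ 2 K β`
(`resetting_recursion_le`), which is within the claimed bound.

For the one-step inequality, fix the iterates `X m` at time `t`, with average `xb`, and bound the
squared deviation from the new average by that from the point `c = xb - η ∇F(xb)`. The noise
contributes at most `η² σ²` per machine. The noiseless part is
`X m - η ∇F_m(X m) - c = ((X m - η ∇F(X m)) - c) - η (∇F_m(X m) - ∇F(X m))`; the first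
term is at most `‖X m - xb‖` because a gradient step of the smooth convex function `F` is
nonexpansive (`gradient_step_nonexpansive`), the second is at most `η ζ`, and Young's inequality with
parameter `K` combines the two.

Two measure-theoretic points need care. No joint measurability of `(x, z) ↦ ∇f(x; z)` is available,
so the one-step inequality is proved for each fixed past, where only the measurability of
`z ↦ ∇f(x; z)` at a fixed `x` matters, and then integrated over the past by Fubini
(`sum_integral_le_of_fibers`). The variance bound concerns a Bochner integral, which is `0` when the
integrand is not integrable; square integrability of the stochastic gradients at the visited points is
recovered from that of the deviations, using independence of two machines
(`memLp_of_sq_deviation`). With one machine or with `η = 0` there is nothing to recover it from, and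
the one-step inequality is trivial.
-/

open MeasureTheory Finset
open scoped RealInnerProductSpace

/-! ### Smooth convex functions and elementary inequalities -/

/-- A function squeezed at `x` between an affine function with slope `v` and the same affine function
plus a quadratic has gradient `v` at `x`. -/
lemma hasGradientAt_of_sandwich {E : Type*} [NormedAddCommGroup E] [InnerProductSpace ℝ E]
    [CompleteSpace E] {φ : E → ℝ} {v x : E} {H : ℝ}
    (h1 : ∀ y, φ y ≤ φ x + ⟪v, y - x⟫ + H / 2 * ‖x - y‖ ^ 2)
    (h2 : ∀ y, φ x + ⟪v, y - x⟫ ≤ φ y) : HasGradientAt φ v x := by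
  rw [hasGradientAt_iff_isLittleO]
  have hO : (fun y : E => φ y - φ x - ⟪v, y - x⟫) =O[nhds x] fun y => ‖y - x‖ ^ 2 := by
    refine Asymptotics.IsBigO.of_bound (H / 2) (Filter.Eventually.of_forall fun y => ?_)
    have a := h1 y
    have b := h2 y
    rw [norm_sub_rev] at a
    rw [Real.norm_of_nonneg (by linarith), Real.norm_of_nonneg (by positivity)]
    linarith
  refine hO.trans_isLittleO ?_
  have h0 : Filter.Tendsto (fun y : E => y - x) (nhds x) (nhds 0) := by
    have : Continuous fun y : E => y - x := by fun_prop
    simpa using this.tendsto x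
  exact (Asymptotics.isLittleO_norm_pow_id (E' := E) one_lt_two).comp_tendsto h0

/-- A gradient step of an `H`-smooth convex function with stepsize at most `1 / H` is nonexpansive. This
follows from cocoercivity, `(1 / H) ‖G x - G y‖² ≤ ⟪x - y, G x - G y⟫`. -/
lemma gradient_step_nonexpansive {E : Type*} [NormedAddCommGroup E] [InnerProductSpace ℝ E]
    {φ : E → ℝ} {G : E → E} {H η : ℝ} (hH : 0 < H) (hη : 0 ≤ η) (hηH : η ≤ 1 / H)
    (h1 : ∀ x y, φ y ≤ φ x + ⟪G x, y - x⟫ + H / 2 * ‖x - y‖ ^ 2)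
    (h2 : ∀ x y, φ x + ⟪G x, y - x⟫ ≤ φ y) (x y : E) :
    ‖(x - η • G x) - (y - η • G y)‖ ^ 2 ≤ ‖x - y‖ ^ 2 := by
  have key : ∀ x y : E, φ x + ⟪G x, y - x⟫ + 1 / (2 * H) * ‖G x - G y‖ ^ 2 ≤ φ y := by
    intro x y
    -- this point minimises the gap between the upper model at `y` and the lower model at `x`
    have a := h1 y (y + (1 / H) • (G x - G y))
    have b := h2 x (y + (1 / H) • (G x - G y))
    have e1 : y + (1 / H) • (G x - G y) - x = (y - x) + (1 / H) • (G x - G y) := by abel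
    have e2 : y - (y + (1 / H) • (G x - G y)) = -((1 / H) • (G x - G y)) := by abel
    rw [e1, inner_add_right, inner_smul_right] at b
    rw [add_sub_cancel_left, inner_smul_right, e2, norm_neg, norm_smul, mul_pow,
      Real.norm_eq_abs, sq_abs] at a
    have c : ⟪G x, G x - G y⟫ - ⟪G y, G x - G y⟫ = ‖G x - G y‖ ^ 2 := by
      rw [← inner_sub_left, real_inner_self_eq_norm_sq]
    have e3 : H / 2 * ((1 / H) ^ 2 * ‖G x - G y‖ ^ 2) = 1 / (2 * H) * ‖G x - G y‖ ^ 2 := by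
      field_simp
    have e4 : 1 / H * ⟪G x, G x - G y⟫ - 1 / H * ⟪G y, G x - G y⟫
        = 2 * (1 / (2 * H) * ‖G x - G y‖ ^ 2) := by
      rw [← mul_sub, c]; field_simp
    linarith
  have k1 := key x y
  have k2 := key y x
  rw [norm_sub_rev (G y)] at k2
  have e : (x - η • G x) - (y - η • G y) = (x - y) - η • (G x - G y) := by
    rw [smul_sub]; abel
  rw [e, norm_sub_sq_real, inner_smul_right, norm_smul, mul_pow, Real.norm_eq_abs, sq_abs]
  have i1 : ⟪x - y, G x - G y⟫ = -(⟪G x, y - x⟫ + ⟪G y, x - y⟫) := by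
    rw [← neg_sub x y, inner_neg_right, real_inner_comm, inner_sub_left]; ring
  have coer : 1 / H * ‖G x - G y‖ ^ 2 ≤ ⟪x - y, G x - G y⟫ := by
    have : 1 / H * ‖G x - G y‖ ^ 2 = 2 * (1 / (2 * H) * ‖G x - G y‖ ^ 2) := by field_simp
    rw [i1, this]; linarith
  have : η * ‖G x - G y‖ ^ 2 ≤ 1 / H * ‖G x - G y‖ ^ 2 := by gcongr
  have hn : η * (η * ‖G x - G y‖ ^ 2) ≤ η * ⟪x - y, G x - G y⟫ := by gcongr; linarith
  have hn0 : 0 ≤ η * (η * ‖G x - G y‖ ^ 2) := by positivity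
  nlinarith

lemma sum_norm_sub_avg_sq_le {E : Type*} [NormedAddCommGroup E] [InnerProductSpace ℝ E]
    {M : ℕ} (u : Fin M → E) (c : E) :
    ∑ m, ‖u m - (M : ℝ)⁻¹ • ∑ n, u n‖ ^ 2 ≤ ∑ m, ‖u m - c‖ ^ 2 := by
  rcases Nat.eq_zero_or_pos M with rfl | hM
  · simp
  have hM' : (M : ℝ) ≠ 0 := by positivity
  set ub := (M : ℝ)⁻¹ • ∑ n, u n with hub
  have h0 : ∑ m, (u m - ub) = 0 := by
    rw [sum_sub_distrib, sum_const, card_univ, Fintype.card_fin, ← Nat.cast_smul_eq_nsmul ℝ, hub,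
      smul_smul, mul_inv_cancel₀ hM', one_smul, sub_self]
  have h1 : ∀ m, ‖u m - c‖ ^ 2 = ‖u m - ub‖ ^ 2 + 2 * ⟪u m - ub, ub - c⟫ + ‖ub - c‖ ^ 2 := by
    intro m
    rw [← norm_add_sq_real, sub_add_sub_cancel]
  simp_rw [h1]
  rw [sum_add_distrib, sum_add_distrib, ← mul_sum, ← sum_inner, h0, inner_zero_left]
  have : 0 ≤ ∑ m : Fin M, ‖ub - c‖ ^ 2 := by positivity
  linarith

lemma norm_sub_sq_le_young {E : Type*} [NormedAddCommGroup E] [InnerProductSpace ℝ E]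
    (a b : E) {κ : ℝ} (hκ : 0 < κ) :
    ‖a - b‖ ^ 2 ≤ (1 + 1 / κ) * ‖a‖ ^ 2 + (1 + κ) * ‖b‖ ^ 2 := by
  have h1 : ‖a - b‖ ^ 2 ≤ (‖a‖ + ‖b‖) ^ 2 := by gcongr; exact norm_sub_le a b
  have h2 : 0 ≤ 1 / κ * (‖a‖ - κ * ‖b‖) ^ 2 := by positivity
  have h3 : 1 / κ * (‖a‖ - κ * ‖b‖) ^ 2 = 1 / κ * ‖a‖ ^ 2 - 2 * ‖a‖ * ‖b‖ + κ * ‖b‖ ^ 2 := by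
    field_simp; ring
  nlinarith

/-! ### Square-integrable samples on product spaces -/

/-- Bias-variance decomposition of one stochastic gradient step. -/
lemma integral_norm_const_sub_sq {E : Type*} [NormedAddCommGroup E] [InnerProductSpace ℝ E]
    [CompleteSpace E] {Z : Type*} [MeasurableSpace Z] (P : Measure Z) [IsProbabilityMeasure P]
    {g : Z → E} (hg : MemLp g 2 P) (w : E) (η : ℝ) :
    ∫ z, ‖w - η • g z‖ ^ 2 ∂P =
      ‖w - η • ∫ z, g z ∂P‖ ^ 2 + η ^ 2 * ∫ z, ‖g z - ∫ z, g z ∂P‖ ^ 2 ∂P := by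
  set G := ∫ z, g z ∂P with hG
  have hgi : Integrable g P := hg.integrable one_le_two
  have hξ : MemLp (fun z => g z - G) 2 P := hg.sub (memLp_const G)
  have hξi : Integrable (fun z => g z - G) P := hξ.integrable one_le_two
  have hξ2 : Integrable (fun z => ‖g z - G‖ ^ 2) P :=
    (memLp_two_iff_integrable_sq_norm hξ.aestronglyMeasurable).1 hξ
  have h0 : ∫ z, (g z - G) ∂P = 0 := by
    rw [integral_sub hgi (integrable_const G)]; simp [hG]
  have hpt : ∀ z, ‖w - η • g z‖ ^ 2 =
      ‖w - η • G‖ ^ 2 - 2 * η * ⟪w - η • G, g z - G⟫ + η ^ 2 * ‖g z - G‖ ^ 2 := by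
    intro z
    have : w - η • g z = (w - η • G) - η • (g z - G) := by rw [smul_sub]; abel
    rw [this, norm_sub_sq_real, inner_smul_right, norm_smul, mul_pow, Real.norm_eq_abs, sq_abs]
    ring
  simp_rw [hpt]
  have hin : Integrable (fun z => 2 * η * ⟪w - η • G, g z - G⟫) P :=
    (hξi.const_inner (w - η • G)).const_mul _
  have i1 : Integrable (fun z => ‖w - η • G‖ ^ 2 - 2 * η * ⟪w - η • G, g z - G⟫) P :=
    (integrable_const _).sub hin
  rw [integral_add i1 (hξ2.const_mul _), integral_sub (integrable_const _) hin,
    integral_const_mul, integral_const_mul, integral_inner hξi, h0]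
  simp

lemma measurePreserving_eval_pair {ι Z : Type*} [Fintype ι] [MeasurableSpace Z]
    (ν : ι → Measure Z) [∀ i, IsProbabilityMeasure (ν i)] {i j : ι} (hij : i ≠ j) :
    MeasurePreserving (fun a : ι → Z => (a i, a j)) (Measure.pi ν) ((ν i).prod (ν j)) := by
  refine ⟨by fun_prop, ?_⟩
  have h := (ProbabilityTheory.iIndepFun_pi (μ := ν) (X := fun _ z => z)
    (fun i => aemeasurable_id)).indepFun hij
  rw [ProbabilityTheory.indepFun_iff_map_prod_eq_prod_map_map (measurable_pi_apply i).aemeasurable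
    (measurable_pi_apply j).aemeasurable] at h
  rw [h]
  exact congrArg₂ _ (measurePreserving_eval ν i).map_eq (measurePreserving_eval ν j).map_eq

/-- If the squared deviations from the average of at least two independent variables `u m` are
integrable, then each `u m` is square integrable: differences `u m - u n` are, and by Fubini so is
`u m` minus a suitable constant. -/
lemma memLp_of_sq_deviation {E : Type*} [NormedAddCommGroup E] [InnerProductSpace ℝ E]
    [CompleteSpace E] [MeasurableSpace E] [BorelSpace E] [SecondCountableTopology E]
    {ι Z : Type*} [Fintype ι] [MeasurableSpace Z]
    (ν : ι → Measure Z) [∀ i, IsProbabilityMeasure (ν i)] {M : ℕ} (hM : 2 ≤ M)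
    {j : Fin M → ι} (hj : Function.Injective j) {u : Fin M → Z → E} (hu : ∀ m, Measurable (u m))
    (hdev : ∀ m, Integrable
      (fun a : ι → Z => ‖u m (a (j m)) - (M : ℝ)⁻¹ • ∑ n, u n (a (j n))‖ ^ 2) (Measure.pi ν))
    (m : Fin M) : MemLp (u m) 2 (ν (j m)) := by
  have hL : ∀ m, MemLp (fun a : ι → Z => u m (a (j m)) - (M : ℝ)⁻¹ • ∑ n, u n (a (j n))) 2
      (Measure.pi ν) := by
    intro m
    refine (memLp_two_iff_integrable_sq_norm ?_).2 (hdev m)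
    have : Measurable fun a : ι → Z => u m (a (j m)) - (M : ℝ)⁻¹ • ∑ n, u n (a (j n)) := by
      fun_prop
    exact this.aestronglyMeasurable
  have : Nontrivial (Fin M) := Fin.nontrivial_iff_two_le.2 hM
  obtain ⟨n, hn⟩ := exists_ne m
  have hd : MemLp (fun a : ι → Z => u m (a (j m)) - u n (a (j n))) 2 (Measure.pi ν) := by
    have := (hL m).sub (hL n)
    refine this.congr_norm ?_ (Filter.Eventually.of_forall fun a => ?_)
    · have : Measurable fun a : ι → Z => u m (a (j m)) - u n (a (j n)) := by fun_prop
      exact this.aestronglyMeasurable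
    · simp
  have hmp := measurePreserving_eval_pair ν (hj.ne hn.symm)
  have hm2 : Measurable fun p : Z × Z => u m p.1 - u n p.2 := by fun_prop
  have hp : Integrable (fun p : Z × Z => ‖u m p.1 - u n p.2‖ ^ 2) ((ν (j m)).prod (ν (j n))) := by
    refine (hmp.integrable_comp (hm2.norm.pow_const 2).aestronglyMeasurable).1 ?_
    exact (memLp_two_iff_integrable_sq_norm hd.aestronglyMeasurable).1 hd
  obtain ⟨z, hz⟩ := hp.prod_left_ae.exists
  have hz' : MemLp (fun y => u m y - u n z) 2 (ν (j m)) := by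
    refine (memLp_two_iff_integrable_sq_norm ?_).2 hz
    exact ((hu m).sub_const _).aestronglyMeasurable
  have := hz'.add (memLp_const (u n z))
  simpa [Pi.add_def] using this

/-- One step of local SGD from fixed iterates `X m`, with independent samples `a (j m)`: the expected
squared deviations after the step are bounded through the distances of the noiseless steps to an
arbitrary reference point `c`. -/
lemma sum_integral_deviation_step_le {E : Type*} [NormedAddCommGroup E] [InnerProductSpace ℝ E]
    [CompleteSpace E] [MeasurableSpace E] [BorelSpace E] [SecondCountableTopology E]
    {ι Z : Type*} [Fintype ι] [MeasurableSpace Z]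
    (ν : ι → Measure Z) [∀ i, IsProbabilityMeasure (ν i)] {M : ℕ} (hM : 2 ≤ M)
    {j : Fin M → ι} (hj : Function.Injective j) {g : Fin M → Z → E} (hg : ∀ m, Measurable (g m))
    {η σ : ℝ} (hη : η ≠ 0)
    (hvar : ∀ m, ∫ z, ‖g m z - ∫ z, g m z ∂ν (j m)‖ ^ 2 ∂ν (j m) ≤ σ ^ 2)
    (X : Fin M → E) (c : E) {r : Fin M → ℝ}
    (hr : ∀ m, ‖(X m - c) - η • ∫ z, g m z ∂ν (j m)‖ ^ 2 ≤ r m)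
    (hdev : ∀ m, Integrable (fun a : ι → Z => ‖(X m - η • g m (a (j m))) -
      (M : ℝ)⁻¹ • ∑ n, (X n - η • g n (a (j n)))‖ ^ 2) (Measure.pi ν)) :
    ∑ m, ∫ a, ‖(X m - η • g m (a (j m))) -
      (M : ℝ)⁻¹ • ∑ n, (X n - η • g n (a (j n)))‖ ^ 2 ∂Measure.pi ν
      ≤ ∑ m, (r m + η ^ 2 * σ ^ 2) := by
  have hu : ∀ m, Measurable fun z => X m - η • g m z := fun m => by
    have := hg m
    fun_prop
  have hL := memLp_of_sq_deviation ν hM hj (u := fun m z => X m - η • g m z) hu hdev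
  have hgL : ∀ m, MemLp (g m) 2 (ν (j m)) := fun m => by
    have := ((memLp_const (X m)).sub (hL m)).const_smul η⁻¹
    simpa [Pi.sub_def, Pi.smul_def, smul_smul, inv_mul_cancel₀ hη] using this
  have hci : ∀ m, Integrable (fun z => ‖(X m - c) - η • g m z‖ ^ 2) (ν (j m)) := fun m => by
    have h := (memLp_const (X m - c)).sub ((hgL m).const_smul η)
    exact (memLp_two_iff_integrable_sq_norm h.aestronglyMeasurable).1 h
  have hcomp : ∀ m, Integrable (fun a : ι → Z => ‖(X m - c) - η • g m (a (j m))‖ ^ 2)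
      (Measure.pi ν) := fun m =>
    (measurePreserving_eval ν (j m)).integrable_comp_of_integrable (hci m)
  have hval : ∀ m, ∫ a : ι → Z, ‖(X m - c) - η • g m (a (j m))‖ ^ 2 ∂Measure.pi ν
      = ∫ z, ‖(X m - c) - η • g m z‖ ^ 2 ∂ν (j m) := fun m => by
    have hmp := measurePreserving_eval ν (j m)
    rw [← hmp.map_eq, integral_map hmp.measurable.aemeasurable]
    rw [hmp.map_eq]; exact (hci m).aestronglyMeasurable
  rw [← integral_finsetSum _ fun m _ => hdev m]
  calc _ ≤ ∫ a : ι → Z, ∑ m, ‖(X m - c) - η • g m (a (j m))‖ ^ 2 ∂Measure.pi ν := by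
        refine integral_mono (integrable_finsetSum _ fun m _ => hdev m)
          (integrable_finsetSum _ fun m _ => hcomp m) fun a => ?_
        refine (sum_norm_sub_avg_sq_le _ c).trans_eq (sum_congr rfl fun m _ => ?_)
        rw [sub_right_comm]
    _ = ∑ m, ∫ z, ‖(X m - c) - η • g m z‖ ^ 2 ∂ν (j m) := by
        rw [integral_finsetSum _ fun m _ => hcomp m]
        exact sum_congr rfl fun m _ => hval m
    _ ≤ _ := by
        refine sum_le_sum fun m _ => ?_
        rw [integral_norm_const_sub_sq _ (hgL m)]
        have := hr m
        have := hvar m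
        gcongr

/-- Fubini on a product space whose coordinates are split by `p`: an inequality between integrals over
the `p`-coordinates `a`, known for each value `b` of the others at which the left-hand integrands are
integrable, integrates to the whole space. -/
lemma sum_integral_le_of_fibers {ι Z : Type*} [Fintype ι] [MeasurableSpace Z]
    (μ : ι → Measure Z) [∀ i, IsProbabilityMeasure (μ i)] (p : ι → Prop) [DecidablePred p]
    {M : ℕ} {Φ : Fin M → (ι → Z) → ℝ} {Ψ : (ι → Z) → ℝ}
    (hΦ : ∀ m, Integrable (Φ m) (Measure.pi μ)) (hΨ : Integrable Ψ (Measure.pi μ))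
    (h : ∀ b : {i // ¬ p i} → Z,
      (∀ m, Integrable (fun a : {i // p i} → Z =>
        Φ m fun i => if h : p i then a ⟨i, h⟩ else b ⟨i, h⟩)
          (Measure.pi fun i : {i // p i} => μ i)) →
      ∑ m, ∫ a : {i // p i} → Z, Φ m (fun i => if h : p i then a ⟨i, h⟩ else b ⟨i, h⟩)
          ∂(Measure.pi fun i : {i // p i} => μ i) ≤
        ∫ a : {i // p i} → Z, Ψ (fun i => if h : p i then a ⟨i, h⟩ else b ⟨i, h⟩)
          ∂(Measure.pi fun i : {i // p i} => μ i)) :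
    ∑ m, ∫ ω, Φ m ω ∂Measure.pi μ ≤ ∫ ω, Ψ ω ∂Measure.pi μ := by
  have he := (measurePreserving_piEquivPiSubtypeProd μ p).symm
  have hΦ' : ∀ m, Integrable (fun q => Φ m _) _ := fun m =>
    he.integrable_comp_of_integrable (hΦ m)
  have hΨ' : Integrable (fun q => Ψ _) _ := he.integrable_comp_of_integrable hΨ
  have hae := ae_all_iff.2 fun m => (hΦ' m).prod_left_ae
  have e1 : ∀ m, ∫ ω, Φ m ω ∂Measure.pi μ = _ := fun m =>
    (he.integral_comp' (Φ m)).symm.trans (integral_prod_symm _ (hΦ' m))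
  rw [← he.integral_comp' Ψ, integral_prod_symm _ hΨ', sum_congr rfl fun m _ => e1 m,
    ← integral_finsetSum _ fun m _ => (hΦ' m).integral_prod_right]
  refine integral_mono_ae (integrable_finsetSum _ fun m _ => (hΦ' m).integral_prod_right)
    hΨ'.integral_prod_right ?_
  filter_upwards [hae] with b hb
  exact h b hb

/-! ### The scalar recursion -/

/-- Between resets the recursion gives `V (q * K + s) ≤ K β ((1 + 1 / K) ^ s - 1)` for `s < K`, and
`(1 + 1 / K) ^ K ≤ e < 3`. -/
lemma resetting_recursion_le {V : ℕ → ℝ} {K T : ℕ} (hK : 1 ≤ K) {β : ℝ} (hβ : 0 ≤ β)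
    (h0 : V 0 = 0) (hsync : ∀ t, t < T → K ∣ t + 1 → V (t + 1) = 0)
    (hstep : ∀ t, t < T → ¬ K ∣ t + 1 → V (t + 1) ≤ (1 + 1 / (K : ℝ)) * V t + β)
    {t : ℕ} (ht : t ≤ T) : V t ≤ 2 * K * β := by
  have hK0 : (0 : ℝ) < K := by exact_mod_cast hK
  have key : ∀ q s : ℕ, s < K → q * K + s ≤ T →
      V (q * K + s) ≤ K * β * ((1 + 1 / (K : ℝ)) ^ s - 1) := by
    intro q s
    induction s with
    | zero =>
      intro _ hq
      rcases Nat.eq_zero_or_pos (q * K) with h | h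
      · simp [h, h0]
      · obtain ⟨r, hr⟩ := Nat.exists_eq_succ_of_ne_zero h.ne'
        have := hsync r (by omega) ⟨q, by rw [mul_comm]; omega⟩
        simp [hr, this]
    | succ s ih =>
      intro hs hq
      have hnd : ¬ K ∣ q * K + s + 1 := by
        rw [add_assoc, Nat.dvd_add_right (Dvd.intro_left q rfl)]
        exact Nat.not_dvd_of_pos_of_lt (by omega) hs
      have h1 := hstep (q * K + s) (by omega) hnd
      have h2 := ih (by omega) (by omega)
      have h3 : (1 + 1 / (K : ℝ)) * V (q * K + s) ≤
        (1 + 1 / (K : ℝ)) * (K * β * ((1 + 1 / (K : ℝ)) ^ s - 1)) := by gcongr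
      have h4 : (1 + 1 / (K : ℝ)) * (K * β * ((1 + 1 / (K : ℝ)) ^ s - 1)) + β
          = K * β * ((1 + 1 / (K : ℝ)) ^ (s + 1) - 1) := by
        rw [pow_succ]; field_simp; ring
      rw [← add_assoc]
      linarith
  have h := key (t / K) (t % K) (Nat.mod_lt _ hK) (by rw [mul_comm, Nat.div_add_mod]; exact ht)
  rw [mul_comm, Nat.div_add_mod] at h
  have hpow : (1 + 1 / (K : ℝ)) ^ (t % K) ≤ 3 := by
    have h1 : (1 : ℝ) ≤ 1 + 1 / (K : ℝ) := by
      have : 0 ≤ 1 / (K : ℝ) := by positivity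
      linarith
    calc (1 + 1 / (K : ℝ)) ^ (t % K) ≤ (1 + 1 / (K : ℝ)) ^ K :=
          pow_le_pow_right₀ h1 (Nat.mod_lt _ hK).le
      _ ≤ Real.exp (1 / K) ^ K := by
          gcongr
          linarith [Real.add_one_le_exp (1 / (K : ℝ))]
      _ = Real.exp 1 := by rw [← Real.exp_nat_mul]; congr 1; field_simp
      _ ≤ 3 := Real.exp_one_lt_three.le
  have : K * β * ((1 + 1 / (K : ℝ)) ^ (t % K) - 1) ≤ K * β * (3 - 1) := by gcongr
  linarith

/-! ### The divergence bound -/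

/-- Divergence bound for Local SGD with a constant stepsize `η ≤ 1/H`: at
every time step, `(1/M) Σ_m 𝔼‖x_t^m - x̄_t‖² ≤ 3Kσ²η² + 6K²η²ζ̄²`. -/
theorem local_sgd_divergence_bound_constant_stepsize
    (d M K T : ℕ) (hM : 1 ≤ M) (hK : 1 ≤ K)
    (H lam σ ζ : ℝ) (hH : 0 < H) (hlam : 0 ≤ lam) (hσ : 0 ≤ σ) (hζ : 0 ≤ ζ)
    (Z : Type*) [MeasurableSpace Z]
    (D : Fin M → Measure Z) [∀ m, IsProbabilityMeasure (D m)]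
    (f : EuclideanSpace ℝ (Fin d) → Z → ℝ)
    (hgradmeas : ∀ x' : EuclideanSpace ℝ (Fin d),
      Measurable fun z => gradient (fun y => f y z) x')
    (hfint : ∀ (m : Fin M) (x' : EuclideanSpace ℝ (Fin d)), Integrable (fun z => f x' z) (D m))
    (Fm : Fin M → EuclideanSpace ℝ (Fin d) → ℝ)
    (hFm : ∀ m x', Fm m x' = ∫ z, f x' z ∂(D m))
    (F : EuclideanSpace ℝ (Fin d) → ℝ)
    (hF : ∀ x', F x' = (M : ℝ)⁻¹ * ∑ m : Fin M, Fm m x')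
    -- each `F_m` is `H`-smooth and `λ`-strongly convex (`λ ≥ 0`)
    (hsmooth : ∀ (m : Fin M) (x' y : EuclideanSpace ℝ (Fin d)),
      Fm m y ≤ Fm m x' + ⟪gradient (Fm m) x', y - x'⟫ + H / 2 * ‖x' - y‖ ^ 2)
    (hsc : ∀ (m : Fin M) (x' y : EuclideanSpace ℝ (Fin d)),
      Fm m y ≥ Fm m x' + ⟪gradient (Fm m) x', y - x'⟫ + lam / 2 * ‖x' - y‖ ^ 2)
    -- uniform variance bound and uniform heterogeneity bound
    (hvar : ∀ (x' : EuclideanSpace ℝ (Fin d)) (m : Fin M),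
      ∫ z, ‖gradient (fun y => f y z) x' - gradient (Fm m) x'‖ ^ 2 ∂(D m) ≤ σ ^ 2)
    (hζbar : ∀ (x' : EuclideanSpace ℝ (Fin d)) (m : Fin M),
      ‖gradient (Fm m) x' - gradient F x'‖ ^ 2 ≤ ζ ^ 2)
    (hswap : ∀ (m : Fin M) (x' : EuclideanSpace ℝ (Fin d)),
      gradient (Fm m) x' = ∫ z, gradient (fun y => f y z) x' ∂(D m))
    -- the fixed stepsize
    (η : ℝ) (hη : 0 ≤ η) (hηH : η ≤ 1 / H)
    -- the Local SGD iterates, synchronized whenever `t` is a multiple of `K`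
    (μΩ : Measure ((Fin T × Fin M) → Z))
    (hμΩ : μΩ = Measure.pi fun i : Fin T × Fin M => D i.2)
    (x : ℕ → Fin M → ((Fin T × Fin M) → Z) → EuclideanSpace ℝ (Fin d))
    (hx0 : ∀ m ω, x 0 m ω = 0)
    (hxrec : ∀ (t : Fin T) (m : Fin M) (ω : (Fin T × Fin M) → Z),
      x ((t : ℕ) + 1) m ω =
        if K ∣ ((t : ℕ) + 1) then
          (M : ℝ)⁻¹ • ∑ n : Fin M, (x (t : ℕ) n ω -
            η • gradient (fun y => f y (ω (t, n))) (x (t : ℕ) n ω))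
        else x (t : ℕ) m ω - η • gradient (fun y => f y (ω (t, m))) (x (t : ℕ) m ω))
    (hsqint : ∀ (t : ℕ) (m : Fin M),
      Integrable (fun ω => ‖x t m ω - (M : ℝ)⁻¹ • ∑ n : Fin M, x t n ω‖ ^ 2) μΩ) :
    ∀ t : ℕ, t ≤ T →
      (M : ℝ)⁻¹ * ∑ m : Fin M,
          ∫ ω, ‖x t m ω - (M : ℝ)⁻¹ • ∑ n : Fin M, x t n ω‖ ^ 2 ∂μΩ ≤
        3 * K * σ ^ 2 * η ^ 2 + 6 * K ^ 2 * η ^ 2 * ζ ^ 2 := by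
  have hM0 : (0 : ℝ) < M := by exact_mod_cast hM
  have hK0 : (0 : ℝ) < K := by exact_mod_cast hK
  have hK1 : (1 : ℝ) ≤ K := by exact_mod_cast hK
  have hsumM : ∀ y : EuclideanSpace ℝ (Fin d), (M : ℝ)⁻¹ • ∑ _n : Fin M, y = y := by
    intro y
    rw [sum_const, card_univ, Fintype.card_fin, ← Nat.cast_smul_eq_nsmul ℝ, smul_smul,
      inv_mul_cancel₀ hM0.ne', one_smul]
  -- `F` inherits the quadratic upper model and the linear lower model with the averaged gradient
  have hFup : ∀ y z, F z ≤ F y + ⟪(M : ℝ)⁻¹ • ∑ m, gradient (Fm m) y, z - y⟫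
      + H / 2 * ‖y - z‖ ^ 2 := by
    intro y z
    have h := sum_le_sum fun m (_ : m ∈ (univ : Finset (Fin M))) => hsmooth m y z
    rw [sum_add_distrib, sum_add_distrib, sum_const, card_univ, Fintype.card_fin,
      nsmul_eq_mul] at h
    have h' := mul_le_mul_of_nonneg_left h (inv_nonneg.2 hM0.le)
    rw [mul_add, mul_add, inv_mul_cancel_left₀ hM0.ne'] at h'
    rwa [hF, hF, real_inner_smul_left, sum_inner]
  have hFlow : ∀ y z, F y + ⟪(M : ℝ)⁻¹ • ∑ m, gradient (Fm m) y, z - y⟫ ≤ F z := by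
    intro y z
    have h : ∑ m, (Fm m y + ⟪gradient (Fm m) y, z - y⟫) ≤ ∑ m, Fm m z :=
      sum_le_sum fun m _ => by
        have h1 := hsc m y z
        have h2 : 0 ≤ lam / 2 * ‖y - z‖ ^ 2 := by positivity
        linarith
    rw [sum_add_distrib] at h
    have h' := mul_le_mul_of_nonneg_left h (inv_nonneg.2 hM0.le)
    rw [mul_add] at h'
    rwa [hF, hF, real_inner_smul_left, sum_inner]
  have hFgrad : ∀ y, (M : ℝ)⁻¹ • ∑ m, gradient (Fm m) y = gradient F y := fun y =>
    (hasGradientAt_of_sandwich (hFup y) (hFlow y)).gradient.symm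
  simp_rw [hFgrad] at hFup hFlow
  have hcontr := gradient_step_nonexpansive hH hη hηH hFup hFlow
  set β : ℝ := (1 + K) * (η ^ 2 * ζ ^ 2) + η ^ 2 * σ ^ 2 with hβ
  have hβ0 : 0 ≤ β := by positivity
  -- the iterates at time `t` depend only on the samples drawn before `t`
  have hpast : ∀ t : ℕ, t ≤ T → ∀ ω ω' : (Fin T × Fin M) → Z,
      (∀ i, (i.1 : ℕ) < t → ω i = ω' i) → ∀ m, x t m ω = x t m ω' := by
    intro t
    induction t with
    | zero => intro _ ω ω' _ m; rw [hx0, hx0]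
    | succ t ih =>
      intro ht ω ω' h m
      have h1 := ih (by omega) ω ω' fun i hi => h i (by omega)
      have h2 : ∀ n, ω (⟨t, ht⟩, n) = ω' (⟨t, ht⟩, n) := fun n => h _ (Nat.lt_succ_self t)
      have r1 := hxrec ⟨t, ht⟩ m ω
      have r2 := hxrec ⟨t, ht⟩ m ω'
      simp only [h1, h2] at r1 r2
      rw [r1, r2]
  intro t ht
  set V : ℕ → ℝ := fun t => (M : ℝ)⁻¹ * ∑ m : Fin M,
    ∫ ω, ‖x t m ω - (M : ℝ)⁻¹ • ∑ n : Fin M, x t n ω‖ ^ 2 ∂μΩ with hV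
  have hVnn : ∀ t, 0 ≤ V t := fun t => by positivity
  have hVsame : ∀ t, (∀ m n ω, x t m ω = x t n ω) → V t = 0 := by
    intro t h
    have h1 : ∀ m ω, x t m ω - (M : ℝ)⁻¹ • ∑ n : Fin M, x t n ω = 0 := by
      intro m ω
      rw [sum_congr rfl fun n _ => h n m ω, hsumM, sub_self]
    simp [hV, h1]
  have hmain : V t ≤ 2 * K * β := by
    refine resetting_recursion_le (T := T) hK hβ0 ?_ ?_ ?_ ht
    · exact hVsame 0 fun m n ω => by rw [hx0, hx0]
    · intro t ht hd
      refine hVsame _ fun m n ω => ?_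
      have r1 := hxrec ⟨t, ht⟩ m ω
      have r2 := hxrec ⟨t, ht⟩ n ω
      simp only [hd, if_true] at r1 r2
      rw [r1, r2]
    · intro t ht hd
      have hrec : ∀ m ω, x (t + 1) m ω =
          x t m ω - η • gradient (fun y => f y (ω (⟨t, ht⟩, m))) (x t m ω) := by
        intro m ω
        have r := hxrec ⟨t, ht⟩ m ω
        simpa only [hd, if_false] using r
      have hVt : V t ≤ (1 + 1 / (K : ℝ)) * V t + β := by
        have : 0 ≤ 1 / (K : ℝ) * V t := mul_nonneg (by positivity) (hVnn t)
        linarith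
      rcases eq_or_ne η 0 with h0 | h0
      · have : V (t + 1) = V t := by simp [hV, hrec, h0]
        rwa [this]
      rcases hM.eq_or_lt with h1 | h1
      · subst h1
        rw [hVsame (t + 1) fun m n ω => by rw [Subsingleton.elim m n]]
        exact (hVnn t).trans hVt
      have hsum : ∑ m : Fin M,
          ∫ ω, ‖x (t + 1) m ω - (M : ℝ)⁻¹ • ∑ n : Fin M, x (t + 1) n ω‖ ^ 2 ∂μΩ ≤
          ∫ ω, ∑ m : Fin M,
            ((1 + 1 / (K : ℝ)) * ‖x t m ω - (M : ℝ)⁻¹ • ∑ n : Fin M, x t n ω‖ ^ 2 + β) ∂μΩ := by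
        subst hμΩ
        refine sum_integral_le_of_fibers (fun i : Fin T × Fin M => D i.2)
          (fun i => i.1 = ⟨t, ht⟩) (hsqint (t + 1))
          (integrable_finsetSum _ fun m _ =>
            ((hsqint t m).const_mul _).add (integrable_const _)) ?_
        intro b hb
        -- a sample for row `t` exists because the sample law is a probability measure
        obtain ⟨a₀⟩ : Nonempty ({i : Fin T × Fin M // i.1 = ⟨t, ht⟩} → Z) :=
          (Measure.pi fun i : {i : Fin T × Fin M // i.1 = ⟨t, ht⟩} => D i.1.2).nonempty_of_neZero
        -- a sample whose row `t` is `a` and whose other rows are given by `b`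
        set glue : ({i : Fin T × Fin M // i.1 = ⟨t, ht⟩} → Z) → (Fin T × Fin M) → Z :=
          fun a i => if h : i.1 = ⟨t, ht⟩ then a ⟨i, h⟩ else b ⟨i, h⟩ with hglue
        set X : Fin M → EuclideanSpace ℝ (Fin d) := fun m => x t m (glue a₀) with hX
        have hXa : ∀ a m, x t m (glue a) = X m := by
          intro a m
          refine hpast t ht.le _ _ (fun i hi => ?_) m
          have : i.1 ≠ ⟨t, ht⟩ := fun h => by rw [h] at hi; exact lt_irrefl _ hi
          simp [hglue, this]
        have hrow : ∀ a m, glue a (⟨t, ht⟩, m) = a ⟨(⟨t, ht⟩, m), rfl⟩ := by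
          intro a m
          simp [hglue]
        change ∀ m, Integrable (fun a => ‖x (t + 1) m (glue a) -
          (M : ℝ)⁻¹ • ∑ n, x (t + 1) n (glue a)‖ ^ 2) _ at hb
        change ∑ m, ∫ a, ‖x (t + 1) m (glue a) -
          (M : ℝ)⁻¹ • ∑ n, x (t + 1) n (glue a)‖ ^ 2 ∂_ ≤ ∫ a, ∑ m,
            ((1 + 1 / (K : ℝ)) * ‖x t m (glue a) -
              (M : ℝ)⁻¹ • ∑ n, x t n (glue a)‖ ^ 2 + β) ∂_
        simp only [hrec, hXa, hrow] at hb ⊢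
        rw [integral_const, probReal_univ, one_smul]
        set xb := (M : ℝ)⁻¹ • ∑ n, X n with hxb
        refine (sum_integral_deviation_step_le
          (fun i : {i : Fin T × Fin M // i.1 = ⟨t, ht⟩} => D i.1.2) h1
          (j := fun m => ⟨(⟨t, ht⟩, m), rfl⟩)
          (fun m n h => by simpa using h)
          (g := fun m z => gradient (fun y => f y z) (X m)) (fun m => hgradmeas (X m)) (σ := σ)
          h0 (fun m => ?_) X (xb - η • gradient F xb)
          (r := fun m => (1 + 1 / (K : ℝ)) * ‖X m - xb‖ ^ 2 + (1 + K) * (η ^ 2 * ζ ^ 2))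
          (fun m => ?_) hb).trans_eq ?_
        · have h := hvar (X m) m
          rw [hswap] at h
          exact h
        · dsimp only
          rw [← hswap]
          have e : X m - (xb - η • gradient F xb) - η • gradient (Fm m) (X m) =
              ((X m - η • gradient F (X m)) - (xb - η • gradient F xb)) -
                η • (gradient (Fm m) (X m) - gradient F (X m)) := by
            rw [smul_sub]; abel
          rw [e]
          refine (norm_sub_sq_le_young _ _ hK0).trans ?_
          rw [norm_smul, mul_pow, Real.norm_eq_abs, sq_abs]
          have c1 := hcontr (X m) xb
          have c2 := hζbar (X m) m
          gcongr
        · exact sum_congr rfl fun m _ => by rw [hβ]; ring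
      have hval : ∫ ω, ∑ m : Fin M,
            ((1 + 1 / (K : ℝ)) * ‖x t m ω - (M : ℝ)⁻¹ • ∑ n : Fin M, x t n ω‖ ^ 2 + β) ∂μΩ
          = (1 + 1 / (K : ℝ)) * (∑ m : Fin M,
            ∫ ω, ‖x t m ω - (M : ℝ)⁻¹ • ∑ n : Fin M, x t n ω‖ ^ 2 ∂μΩ) + M * β := by
        subst hμΩ
        have hfi : ∀ m, Integrable (fun ω => (1 + 1 / (K : ℝ)) *
            ‖x t m ω - (M : ℝ)⁻¹ • ∑ n : Fin M, x t n ω‖ ^ 2 + β)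
            (Measure.pi fun i : Fin T × Fin M => D i.2) := fun m =>
          ((hsqint t m).const_mul _).add (integrable_const _)
        rw [integral_finsetSum _ fun m _ => hfi m, mul_sum]
        simp_rw [integral_add ((hsqint t _).const_mul _) (integrable_const β),
          integral_const_mul]
        simp [sum_add_distrib]
      rw [hval] at hsum
      have h := mul_le_mul_of_nonneg_left hsum (inv_nonneg.2 hM0.le)
      rw [mul_add, inv_mul_cancel_left₀ hM0.ne', mul_left_comm] at h
      exact h
  refine hmain.trans ?_
  have h1 : 0 ≤ K * (η ^ 2 * σ ^ 2) := by positivity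
  have h2 : (K : ℝ) * (1 + K) * (η ^ 2 * ζ ^ 2) ≤ K * (K + K) * (η ^ 2 * ζ ^ 2) := by gcongr
  have h3 : 0 ≤ (K : ℝ) ^ 2 * (η ^ 2 * ζ ^ 2) := by positivity
  rw [hβ]
  nlinarith
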